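/- arXiv:1701.07682 — 2 statements merged into one kernel-verified Lean document; each statement's English description precedes it below -/
import Mathlib

section
/- Let λ > -1/2 and let j, k be integers with 1 ≤ j < k. (i) If -1/2 < λ ≤ 0 or λ ≥ 1, then (j/k)^{2λ-2} ≤ β_k²/β_j² ≤ ((j+λ)/(k+λ))^{2λ-2}. (ii) If 0 < λ ≤ 1, then (j/k)^{2λ-2} ≥ β_k²/β_j² ≥ ((j+λ)/(k+λ))^{2λ-2}. -/
/-- `h_x^2 = Γ(x+2λ)/((x+λ)Γ(x+1))`. -/
noncomputable def hsq (lam x : ℝ) : ℝ :=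
  Real.Gamma (x + 2*lam) / ((x + lam) * Real.Gamma (x + 1))

/-- `α_k = (2k-1+λ) h_{2k-1}`. -/
noncomputable def gegAlpha (lam : ℝ) (k : ℕ) : ℝ :=
  (2*(k:ℝ) - 1 + lam) * Real.sqrt (hsq lam (2*(k:ℝ) - 1))

/-- `β_k = 1/h_{2k}`. -/
noncomputable def gegBeta (lam : ℝ) (k : ℕ) : ℝ :=
  1 / Real.sqrt (hsq lam (2*(k:ℝ)))

/-- `α̃_k^2 = ((2k-2+λ) h_{2k-2})^2`, with `α̃_1^2 = λΓ(2λ) = Γ(2λ+1)/2`. -/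
noncomputable def gegAlphaTildeSq (lam : ℝ) (k : ℕ) : ℝ :=
  if k = 1 then Real.Gamma (2*lam + 1) / 2
  else (2*(k:ℝ) - 2 + lam)^2 * hsq lam (2*(k:ℝ) - 2)

/-- `β̃_k = 1/h_{2k-1}`. -/
noncomputable def gegBetaTilde (lam : ℝ) (k : ℕ) : ℝ :=
  1 / Real.sqrt (hsq lam (2*(k:ℝ) - 1))

/-- The matrix `A_m` with entries `a_{kj} = (Σ_{i=1}^{min(k,j)} α_i^2) β_k β_j` (1-based). -/
noncomputable def Amat (lam : ℝ) (m : ℕ) : Matrix (Fin m) (Fin m) ℝ :=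
  fun k j => (∑ i ∈ Finset.Icc 1 (min (k.val+1) (j.val+1)), (gegAlpha lam i)^2) *
    gegBeta lam (k.val+1) * gegBeta lam (j.val+1)

/-- The matrix `Ã_m` with entries `ã_{kj} = (Σ_{i=1}^{min(k,j)} α̃_i^2) β̃_k β̃_j` (1-based). -/
noncomputable def AmatTilde (lam : ℝ) (m : ℕ) : Matrix (Fin m) (Fin m) ℝ :=
  fun k j => (∑ i ∈ Finset.Icc 1 (min (k.val+1) (j.val+1)), gegAlphaTildeSq lam i) *
    gegBetaTilde lam (k.val+1) * gegBetaTilde lam (j.val+1)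

/-- `B_n = 4 A_m` for `n = 2m` and `B_n = 4 Ã_m` for `n = 2m-1`; in both cases `m = (n+1)/2`. -/
noncomputable def Bmat (lam : ℝ) (n : ℕ) : Matrix (Fin ((n+1)/2)) (Fin ((n+1)/2)) ℝ :=
  if n % 2 = 0 then (4:ℝ) • Amat lam ((n+1)/2) else (4:ℝ) • AmatTilde lam ((n+1)/2)

/-- Maximum absolute row-sum norm. -/
noncomputable def rowSumNorm {m : ℕ} (A : Matrix (Fin m) (Fin m) ℝ) : ℝ :=
  ⨆ k, ∑ j, |A k j|

/-- Squared Frobenius norm. -/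
noncomputable def frobSq {m : ℕ} (A : Matrix (Fin m) (Fin m) ℝ) : ℝ :=
  ∑ k, ∑ j, (A k j)^2

open Set

lemma ConcaveOn.nonneg_of_mem_Icc_of_eq_zero {s : Set ℝ} {f : ℝ → ℝ} (hf : ConcaveOn ℝ s f)
    (h0s : (0 : ℝ) ∈ s) (h1s : (1 : ℝ) ∈ s) (h0 : f 0 = 0) (h1 : f 1 = 0) {t : ℝ}
    (ht0 : 0 ≤ t) (ht1 : t ≤ 1) : 0 ≤ f t := by
  have h := hf.2 h0s h1s (sub_nonneg.2 ht1) ht0 (by ring)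
  simpa [h0, h1] using h

lemma ConcaveOn.nonpos_of_le_zero_or_one_le_of_eq_zero {s : Set ℝ} {f : ℝ → ℝ}
    (hf : ConcaveOn ℝ s f) (h0s : (0 : ℝ) ∈ s) (h1s : (1 : ℝ) ∈ s) (h0 : f 0 = 0) (h1 : f 1 = 0)
    {t : ℝ} (hts : t ∈ s) (ht : t ≤ 0 ∨ 1 ≤ t) : f t ≤ 0 := by
  rcases ht with ht | ht
  · have hp : 0 < 1 - t := by linarith
    have h := hf.2 hts h1s (show 0 ≤ 1 / (1 - t) by positivity)
      (show 0 ≤ -t / (1 - t) from div_nonneg (by linarith) hp.le) (by field_simp; ring)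
    have he : (1 / (1 - t)) • t + (-t / (1 - t)) • (1 : ℝ) = 0 := by
      simp only [smul_eq_mul]; ring
    rw [he, h0, h1, smul_zero, add_zero, smul_eq_mul] at h
    by_contra! hc
    exact absurd h (not_le.2 (by positivity))
  · have hp : 0 < t := by linarith
    have h := hf.2 hts h0s (show 0 ≤ 1 / t by positivity)
      (show 0 ≤ 1 - 1 / t by rw [sub_nonneg, div_le_one hp]; exact ht) (by ring)
    have he : (1 / t) • t + (1 - 1 / t) • (0 : ℝ) = 1 := by
      simp only [smul_eq_mul]; field_simp; ring
    rw [he, h0, h1, smul_zero, add_zero, smul_eq_mul] at h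
    by_contra! hc
    exact absurd h (not_le.2 (by positivity))

/-- Minus the logarithm of `(h_x² / h_{x+1}²) (x / (x+1))^{2-2t}` as a function of `t = λ`. -/
noncomputable def logStepLower (x t : ℝ) : ℝ :=
  Real.log (x + t) + Real.log (x + 2 * t) - Real.log (x + 1 + t) - Real.log (x + 1)
    + (2 - 2 * t) * (Real.log (x + 1) - Real.log x)

/-- The logarithm of `(h_x² / h_{x+1}²) (y / (y+1))^{2-2t}`, where `y = x + 2t`, as a function of
`y` and `t = λ`. -/
noncomputable def logStepUpper (y t : ℝ) : ℝ :=
  Real.log (y + 1 - t) + Real.log (y + 1 - 2 * t) - Real.log (y - t) - Real.log y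
    - (2 - 2 * t) * (Real.log (y + 1) - Real.log y)

lemma concaveOn_logStepLower {x : ℝ} (hx : 0 < x) :
    ConcaveOn ℝ (Ioi (-x / 2)) (logStepLower x) := by
  have hd : ∀ t ∈ Ioi (-x / 2), HasDerivAt (logStepLower x)
      (1 / (x + t) + 2 / (x + 2 * t) - 1 / (x + 1 + t)
        - 2 * (Real.log (x + 1) - Real.log x)) t := by
    intro t ht
    rw [mem_Ioi] at ht
    have i := hasDerivAt_id' t
    have h := (((((i.const_add x).log (by linarith)).add
      (((i.const_mul 2).const_add x).log (by linarith))).sub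
      ((i.const_add (x + 1)).log (by linarith))).sub_const (Real.log (x + 1))).add
      (((i.const_mul 2).const_sub 2).mul_const (Real.log (x + 1) - Real.log x))
    exact h.congr_deriv (by ring)
  have hd2 : ∀ t ∈ Ioi (-x / 2), HasDerivAt (fun t ↦ 1 / (x + t) + 2 / (x + 2 * t)
      - 1 / (x + 1 + t) - 2 * (Real.log (x + 1) - Real.log x))
      (-1 / (x + t) ^ 2 - 4 / (x + 2 * t) ^ 2 + 1 / (x + 1 + t) ^ 2) t := by
    intro t ht
    rw [mem_Ioi] at ht
    have i := hasDerivAt_id' t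
    have h := ((((hasDerivAt_const t (1 : ℝ)).div (i.const_add x) (by linarith)).add
      ((hasDerivAt_const t (2 : ℝ)).div ((i.const_mul 2).const_add x) (by linarith))).sub
      ((hasDerivAt_const t (1 : ℝ)).div (i.const_add (x + 1)) (by linarith))).sub_const
      (2 * (Real.log (x + 1) - Real.log x))
    exact h.congr_deriv (by ring)
  refine concaveOn_of_hasDerivWithinAt2_nonpos (convex_Ioi _)
    (fun t ht ↦ (hd t ht).continuousAt.continuousWithinAt)
    (fun t ht ↦ (hd t (interior_subset ht)).hasDerivWithinAt)
    (fun t ht ↦ (hd2 t (interior_subset ht)).hasDerivWithinAt) fun t ht ↦ ?_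
  have ht := interior_subset ht
  rw [mem_Ioi] at ht
  have h1 : 0 < x + t := by linarith
  have h2 : 1 / (x + 1 + t) ^ 2 ≤ 1 / (x + t) ^ 2 := by gcongr; linarith
  have h3 : 0 ≤ 4 / (x + 2 * t) ^ 2 := by positivity
  rw [neg_div]
  linarith

lemma concaveOn_logStepUpper {y : ℝ} (hy : 1 < y) :
    ConcaveOn ℝ (Iio ((y + 1) / 2)) (logStepUpper y) := by
  have hd : ∀ t ∈ Iio ((y + 1) / 2), HasDerivAt (logStepUpper y)
      (-1 / (y + 1 - t) - 2 / (y + 1 - 2 * t) + 1 / (y - t)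
        + 2 * (Real.log (y + 1) - Real.log y)) t := by
    intro t ht
    rw [mem_Iio] at ht
    have i := hasDerivAt_id' t
    have h := (((((i.const_sub (y + 1)).log (by linarith)).add
      (((i.const_mul 2).const_sub (y + 1)).log (by linarith))).sub
      ((i.const_sub y).log (by linarith))).sub_const (Real.log y)).sub
      (((i.const_mul 2).const_sub 2).mul_const (Real.log (y + 1) - Real.log y))
    exact h.congr_deriv (by ring)
  have hd2 : ∀ t ∈ Iio ((y + 1) / 2), HasDerivAt (fun t ↦ -1 / (y + 1 - t)
      - 2 / (y + 1 - 2 * t) + 1 / (y - t) + 2 * (Real.log (y + 1) - Real.log y))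
      (-1 / (y + 1 - t) ^ 2 - 4 / (y + 1 - 2 * t) ^ 2 + 1 / (y - t) ^ 2) t := by
    intro t ht
    rw [mem_Iio] at ht
    have i := hasDerivAt_id' t
    have h := ((((hasDerivAt_const t (-1 : ℝ)).div (i.const_sub (y + 1)) (by linarith)).sub
      ((hasDerivAt_const t (2 : ℝ)).div ((i.const_mul 2).const_sub (y + 1)) (by linarith))).add
      ((hasDerivAt_const t (1 : ℝ)).div (i.const_sub y) (by linarith))).add_const
      (2 * (Real.log (y + 1) - Real.log y))
    exact h.congr_deriv (by ring)
  refine concaveOn_of_hasDerivWithinAt2_nonpos (convex_Iio _)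
    (fun t ht ↦ (hd t ht).continuousAt.continuousWithinAt)
    (fun t ht ↦ (hd t (interior_subset ht)).hasDerivWithinAt)
    (fun t ht ↦ (hd2 t (interior_subset ht)).hasDerivWithinAt) fun t ht ↦ ?_
  have ht := interior_subset ht
  rw [mem_Iio] at ht
  have h1 : 0 < y + 1 - 2 * t := by linarith
  have h2 : 1 / (y - t) ^ 2 ≤ 1 / ((y + 1 - 2 * t) / 2) ^ 2 := by gcongr; linarith
  have h3 : 1 / ((y + 1 - 2 * t) / 2) ^ 2 = 4 / (y + 1 - 2 * t) ^ 2 := by field_simp; norm_num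
  have h4 : 0 ≤ 1 / (y + 1 - t) ^ 2 := by positivity
  rw [neg_div]
  linarith

lemma logStepLower_zero (x : ℝ) : logStepLower x 0 = 0 := by
  simp only [logStepLower, mul_zero, add_zero, sub_zero]; ring

lemma logStepLower_one (x : ℝ) : logStepLower x 1 = 0 := by
  rw [logStepLower, show x + 1 + 1 = x + 2 * 1 by ring]; ring

lemma logStepUpper_zero (y : ℝ) : logStepUpper y 0 = 0 := by
  simp only [logStepUpper, mul_zero, sub_zero]; ring

lemma logStepUpper_one (y : ℝ) : logStepUpper y 1 = 0 := by
  rw [logStepUpper, show y + 1 - 1 = y by ring, show y + 1 - 2 * 1 = y - 1 by ring]; ring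

lemma hsq_pos {lam x : ℝ} (hx : 0 < x) (hl : 0 < x + 2 * lam) : 0 < hsq lam x := by
  have h1 := Real.Gamma_pos_of_pos hl
  have h2 := Real.Gamma_pos_of_pos (show 0 < x + 1 by linarith)
  have h3 : 0 < x + lam := by linarith
  unfold hsq
  positivity

lemma log_hsq_add_one {lam x : ℝ} (hx : 0 < x) (hl : 0 < x + 2 * lam) :
    Real.log (hsq lam (x + 1)) = Real.log (hsq lam x) + Real.log (x + 2 * lam)
      + Real.log (x + lam) - Real.log (x + 1 + lam) - Real.log (x + 1) := by
  have h1 := Real.Gamma_pos_of_pos hl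
  have h2 := Real.Gamma_pos_of_pos (show 0 < x + 1 by linarith)
  have h3 : 0 < x + lam := by linarith
  have h4 : 0 < x + 1 + lam := by linarith
  have h5 : 0 < x + 1 := by linarith
  unfold hsq
  rw [show x + 1 + 2 * lam = x + 2 * lam + 1 by ring, Real.Gamma_add_one hl.ne',
    Real.Gamma_add_one h5.ne', Real.log_div (by positivity) (by positivity),
    Real.log_div (by positivity) (by positivity), Real.log_mul (by positivity) (by positivity),
    Real.log_mul (by positivity) (by positivity), Real.log_mul (by positivity) (by positivity),
    Real.log_mul (by positivity) (by positivity)]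
  ring

/-- The logarithm of `n^{2λ-2} / h_n²`. -/
noncomputable def logLower (lam : ℝ) (n : ℕ) : ℝ :=
  (2 * lam - 2) * Real.log n - Real.log (hsq lam n)

/-- The logarithm of `(n+2λ)^{2λ-2} / h_n²`. -/
noncomputable def logUpper (lam : ℝ) (n : ℕ) : ℝ :=
  (2 * lam - 2) * Real.log (n + 2 * lam) - Real.log (hsq lam n)

lemma logLower_succ {lam : ℝ} {n : ℕ} (hn : 0 < (n : ℝ)) (hl : 0 < n + 2 * lam) :
    logLower lam (n + 1) = logLower lam n - logStepLower n lam := by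
  unfold logLower logStepLower
  push_cast
  rw [log_hsq_add_one hn hl]
  ring

lemma logUpper_succ {lam : ℝ} {n : ℕ} (hn : 0 < (n : ℝ)) (hl : 0 < n + 2 * lam) :
    logUpper lam (n + 1) = logUpper lam n + logStepUpper (n + 2 * lam) lam := by
  unfold logUpper logStepUpper
  push_cast
  rw [log_hsq_add_one hn hl, show (n : ℝ) + 2 * lam + 1 - lam = n + 1 + lam by ring,
    show (n : ℝ) + 2 * lam + 1 - 2 * lam = n + 1 by ring,
    show (n : ℝ) + 2 * lam - lam = n + lam by ring,
    show (n : ℝ) + 1 + 2 * lam = n + 2 * lam + 1 by ring]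
  ring

lemma le_of_le_succ_of_two_le {f : ℕ → ℝ} (hf : ∀ n, 2 ≤ n → f n ≤ f (n + 1)) {m n : ℕ}
    (hm : 2 ≤ m) (hmn : m ≤ n) : f m ≤ f n :=
  Nat.le_induction le_rfl (fun i hi ih ↦ ih.trans (hf i (hm.trans hi))) n hmn

lemma gegBeta_sq_div_eq_exp {lam : ℝ} {j k : ℕ} (hj : 0 < hsq lam (2 * j))
    (hk : 0 < hsq lam (2 * k)) :
    gegBeta lam k ^ 2 / gegBeta lam j ^ 2
      = Real.exp (Real.log (hsq lam (2 * j)) - Real.log (hsq lam (2 * k))) := by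
  rw [Real.exp_sub, Real.exp_log hj, Real.exp_log hk, gegBeta, gegBeta, div_pow, div_pow,
    Real.sq_sqrt hj.le, Real.sq_sqrt hk.le]
  field_simp

lemma div_rpow_eq_exp {a b : ℝ} (ha : 0 < a) (hb : 0 < b) (p : ℝ) :
    (a / b) ^ p = Real.exp (p * Real.log (2 * a) - p * Real.log (2 * b)) := by
  rw [Real.rpow_def_of_pos (by positivity), Real.log_div ha.ne' hb.ne',
    Real.log_mul two_ne_zero ha.ne', Real.log_mul two_ne_zero hb.ne']
  ring_nf

theorem beta_ratio_bounds (lam : ℝ) (hlam : -(1/2 : ℝ) < lam)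
    (j k : ℕ) (hj : 1 ≤ j) (hjk : j < k) :
    ((lam ≤ 0 ∨ 1 ≤ lam) →
      ((j : ℝ)/(k : ℝ)) ^ (2*lam - 2) ≤ (gegBeta lam k)^2 / (gegBeta lam j)^2 ∧
      (gegBeta lam k)^2 / (gegBeta lam j)^2 ≤ (((j : ℝ) + lam)/((k : ℝ) + lam)) ^ (2*lam - 2)) ∧
    (0 < lam → lam ≤ 1 →
      (((j : ℝ) + lam)/((k : ℝ) + lam)) ^ (2*lam - 2) ≤ (gegBeta lam k)^2 / (gegBeta lam j)^2 ∧
      (gegBeta lam k)^2 / (gegBeta lam j)^2 ≤ ((j : ℝ)/(k : ℝ)) ^ (2*lam - 2)) := by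
  have hjR : (1 : ℝ) ≤ j := by exact_mod_cast hj
  have hkR : (1 : ℝ) ≤ k := by exact_mod_cast hj.trans hjk.le
  have two_le {n : ℕ} (hn : 2 ≤ n) : (2 : ℝ) ≤ n := by exact_mod_cast hn
  have hlow (h : ∀ x : ℝ, 2 ≤ x → logStepLower x lam ≤ 0) :
      logLower lam (2 * j) ≤ logLower lam (2 * k) := by
    refine le_of_le_succ_of_two_le (fun n hn ↦ ?_) (by omega) (by omega)
    have := two_le hn
    rw [logLower_succ (by linarith) (by linarith)]
    linarith [h n this]
  have hlow_rev (h : ∀ x : ℝ, 2 ≤ x → 0 ≤ logStepLower x lam) :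
      -logLower lam (2 * j) ≤ -logLower lam (2 * k) := by
    refine le_of_le_succ_of_two_le (f := fun n ↦ -logLower lam n) (fun n hn ↦ ?_)
      (by omega) (by omega)
    have := two_le hn
    rw [logLower_succ (by linarith) (by linarith)]
    linarith [h n this]
  have hup (h : ∀ x : ℝ, 2 ≤ x → logStepUpper (x + 2 * lam) lam ≤ 0) :
      -logUpper lam (2 * j) ≤ -logUpper lam (2 * k) := by
    refine le_of_le_succ_of_two_le (f := fun n ↦ -logUpper lam n) (fun n hn ↦ ?_)
      (by omega) (by omega)
    have := two_le hn
    rw [logUpper_succ (by linarith) (by linarith)]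
    linarith [h n this]
  have hup_rev (h : ∀ x : ℝ, 2 ≤ x → 0 ≤ logStepUpper (x + 2 * lam) lam) :
      logUpper lam (2 * j) ≤ logUpper lam (2 * k) := by
    refine le_of_le_succ_of_two_le (fun n hn ↦ ?_) (by omega) (by omega)
    have := two_le hn
    rw [logUpper_succ (by linarith) (by linarith)]
    linarith [h n this]
  rw [gegBeta_sq_div_eq_exp (hsq_pos (by linarith) (by linarith))
      (hsq_pos (by linarith) (by linarith)),
    div_rpow_eq_exp (show (0 : ℝ) < j by linarith) (show (0 : ℝ) < k by linarith),
    div_rpow_eq_exp (show (0 : ℝ) < j + lam by linarith) (show (0 : ℝ) < k + lam by linarith)]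
  simp only [Real.exp_le_exp]
  simp only [logLower, logUpper, Nat.cast_mul, Nat.cast_ofNat, ← mul_add]
    at hlow hlow_rev hup hup_rev
  have mem0 {x : ℝ} (hx : 2 ≤ x) : (0 : ℝ) ∈ Ioi (-x / 2) := by rw [mem_Ioi]; linarith
  have mem1 {x : ℝ} (hx : 2 ≤ x) : (1 : ℝ) ∈ Ioi (-x / 2) := by rw [mem_Ioi]; linarith
  have mem0' {x : ℝ} (hx : 2 ≤ x) : (0 : ℝ) ∈ Iio ((x + 2 * lam + 1) / 2) := by
    rw [mem_Iio]; linarith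
  have mem1' {x : ℝ} (hx : 2 ≤ x) : (1 : ℝ) ∈ Iio ((x + 2 * lam + 1) / 2) := by
    rw [mem_Iio]; linarith
  constructor
  · intro h
    have h1 := hlow fun x hx ↦
      (concaveOn_logStepLower (by linarith)).nonpos_of_le_zero_or_one_le_of_eq_zero
        (mem0 hx) (mem1 hx) (logStepLower_zero x) (logStepLower_one x)
        (by rw [mem_Ioi]; linarith) h
    have h2 := hup fun x hx ↦
      (concaveOn_logStepUpper (by linarith)).nonpos_of_le_zero_or_one_le_of_eq_zero
        (mem0' hx) (mem1' hx) (logStepUpper_zero _) (logStepUpper_one _)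
        (by rw [mem_Iio]; linarith) h
    constructor <;> linarith
  · intro h0 h1
    have h2 := hlow_rev fun x hx ↦
      (concaveOn_logStepLower (by linarith)).nonneg_of_mem_Icc_of_eq_zero
        (mem0 hx) (mem1 hx) (logStepLower_zero x) (logStepLower_one x) h0.le h1
    have h3 := hup_rev fun x hx ↦
      (concaveOn_logStepUpper (by linarith)).nonneg_of_mem_Icc_of_eq_zero
        (mem0' hx) (mem1' hx) (logStepUpper_zero _) (logStepUpper_one _) h0.le h1
    constructor <;> linarith
end

section
/- Let λ > 2 and let n ≥ 1 be a natural number. Then the maximum absolute row-sum norm of B_n satisfies ‖B_n‖_∞ ≤ (1/((λ+2)(λ+3)))·n(n+λ)(n+2λ)(n+3λ+6) ≤ (1/((λ+2)(λ+3)))·n(n+2λ+2)³. -/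
/-- Closed form of the partial sums `∑ (x+λ)² h_x²` over `x = y-1, y-3, …`. -/
noncomputable def gegPartialSum (lam y : ℝ) : ℝ :=
  Real.Gamma (y + 1 + 2*lam) / Real.Gamma y / (2 * (2*lam + 1))

/-- `1/h_y`. -/
noncomputable def gegWeight (lam y : ℝ) : ℝ := 1 / Real.sqrt (hsq lam y)

section Scalar

variable {lam y : ℝ}

lemma hsq_pos_s15 (hlam : 0 < lam) (hy : 0 ≤ y) : 0 < hsq lam y := by
  have h1 := Real.Gamma_pos_of_pos (show 0 < y + 2*lam by positivity)
  have h2 := Real.Gamma_pos_of_pos (show 0 < y + 1 by positivity)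
  unfold hsq
  positivity

lemma gegWeight_pos (hlam : 0 < lam) (hy : 0 ≤ y) : 0 < gegWeight lam y := by
  have := hsq_pos_s15 hlam hy
  unfold gegWeight
  positivity

lemma gegPartialSum_pos (hlam : 0 < lam) (hy : 0 < y) : 0 < gegPartialSum lam y := by
  have h1 := Real.Gamma_pos_of_pos (show 0 < y + 1 + 2*lam by positivity)
  have h2 := Real.Gamma_pos_of_pos hy
  unfold gegPartialSum
  positivity

lemma gegWeight_sq (hlam : 0 < lam) (hy : 0 ≤ y) : gegWeight lam y ^ 2 = 1 / hsq lam y := by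
  rw [gegWeight, div_pow, Real.sq_sqrt (hsq_pos_s15 hlam hy).le, one_pow]

lemma hsq_mul_eq (hlam : 0 < lam) (hy : 0 ≤ y) :
    hsq lam y * ((y + lam) * Real.Gamma (y + 1)) = Real.Gamma (y + 2*lam) := by
  have h2 := Real.Gamma_pos_of_pos (show 0 < y + 1 by positivity)
  unfold hsq
  field_simp

lemma gegPartialSum_mul_eq (hlam : 0 < lam) (hy : 0 < y) :
    gegPartialSum lam y * (2 * (2*lam + 1)) * Real.Gamma y = Real.Gamma (y + 1 + 2*lam) := by
  have h2 := Real.Gamma_pos_of_pos hy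
  unfold gegPartialSum
  field_simp

lemma gegPartialSum_mul_gegWeight_sq (hlam : 0 < lam) (hy : 0 < y) :
    2 * (2*lam + 1) * (gegPartialSum lam y * gegWeight lam y ^ 2)
      = y * (y + lam) * (y + 2*lam) := by
  have hG := Real.Gamma_pos_of_pos hy
  have hh := hsq_pos_s15 hlam hy.le
  have e1 := hsq_mul_eq hlam hy.le
  have e2 := gegPartialSum_mul_eq hlam hy
  rw [Real.Gamma_add_one hy.ne'] at e1
  rw [show y + 1 + 2*lam = (y + 2*lam) + 1 by ring,
    Real.Gamma_add_one (by positivity), ← e1] at e2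
  rw [gegWeight_sq hlam hy.le]
  field_simp
  apply mul_right_cancel₀ hG.ne'
  linear_combination e2

lemma gegPartialSum_add_two_mul (hlam : 0 < lam) (hy : 0 < y) :
    gegPartialSum lam (y + 2) * (y * (y + 1))
      = gegPartialSum lam y * ((y + 2*lam + 1) * (y + 2*lam + 2)) := by
  have hG := Real.Gamma_pos_of_pos hy
  have e1 := gegPartialSum_mul_eq hlam hy
  have e2 := gegPartialSum_mul_eq hlam (show 0 < y + 2 by positivity)
  rw [show y + 2 + 1 + 2*lam = (y + 1 + 2*lam) + 1 + 1 by ring,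
    Real.Gamma_add_one (by positivity), Real.Gamma_add_one (by positivity), ← e1,
    show y + 2 = y + 1 + 1 by ring, Real.Gamma_add_one (by positivity),
    Real.Gamma_add_one (by positivity), show y + 1 + 1 = y + 2 by ring] at e2
  apply mul_right_cancel₀ (show 2 * (2*lam + 1) * Real.Gamma y ≠ 0 by positivity)
  linear_combination e2

lemma gegPartialSum_add_two (hlam : 0 < lam) (hy : 0 < y) :
    gegPartialSum lam (y + 2)
      = gegPartialSum lam y + (y + 1 + lam)^2 * hsq lam (y + 1) := by
  have hG := Real.Gamma_pos_of_pos hy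
  have e1 := gegPartialSum_add_two_mul hlam hy
  have e2 := gegPartialSum_mul_eq hlam hy
  have e3 := hsq_mul_eq hlam (show 0 ≤ y + 1 by positivity)
  rw [Real.Gamma_add_one (by positivity), Real.Gamma_add_one (by positivity), ← e2] at e3
  have e4 : hsq lam (y + 1) * ((y + 1 + lam) * ((y + 1) * y))
      = gegPartialSum lam y * (2 * (2*lam + 1)) := by
    apply mul_right_cancel₀ hG.ne'
    linear_combination e3
  apply mul_right_cancel₀ (show y * (y + 1) ≠ 0 by positivity)
  linear_combination e1 - (y + 1 + lam) * e4

lemma hsq_add_two_mul (hlam : 0 < lam) (hy : 0 ≤ y) :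
    hsq lam (y + 2) * ((y + lam + 2) * (y + 1) * (y + 2))
      = hsq lam y * ((y + lam) * (y + 2*lam) * (y + 2*lam + 1)) := by
  have hG := Real.Gamma_pos_of_pos (show 0 < y + 1 by positivity)
  have e1 := hsq_mul_eq hlam hy
  have e2 := hsq_mul_eq hlam (show 0 ≤ y + 2 by positivity)
  rw [show y + 2 + 2*lam = (y + 2*lam) + 1 + 1 by ring,
    Real.Gamma_add_one (s := y + 2*lam + 1) (by positivity),
    Real.Gamma_add_one (s := y + 2*lam) (by positivity), ← e1,
    show y + 2 + 1 = y + 1 + 1 + 1 by ring,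
    Real.Gamma_add_one (s := y + 1 + 1) (by positivity),
    Real.Gamma_add_one (s := y + 1) (by positivity)] at e2
  apply mul_right_cancel₀ hG.ne'
  linear_combination e2

lemma gegWeight_mul_le (hlam : 2 < lam) (hy : 0 ≤ y) :
    gegWeight lam y * (y + 1) ≤ gegWeight lam (y + 2) * (y + 2*lam - 1) := by
  have hlam0 : 0 < lam := by linarith
  have h1 := hsq_pos_s15 hlam0 hy
  have h2 := hsq_pos_s15 hlam0 (show 0 ≤ y + 2 by positivity)
  have hr : 0 ≤ y + 2*lam - 1 := by linarith
  have hw := gegWeight_pos hlam0 (show 0 ≤ y + 2 by positivity)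
  refine le_of_sq_le_sq ?_ (by positivity)
  rw [mul_pow, mul_pow, gegWeight_sq hlam0 hy, gegWeight_sq hlam0 (by positivity),
    one_div_mul_eq_div, one_div_mul_eq_div, div_le_div_iff₀ h1 h2]
  have e := hsq_add_two_mul hlam0 hy
  have hpoly : (y + lam) * (y + 2*lam) * (y + 2*lam + 1) * (y + 1)
      ≤ (y + 2*lam - 1)^2 * ((y + lam + 2) * (y + 2)) := by
    obtain ⟨t, rfl⟩ : ∃ t, lam = t + 2 := ⟨lam - 2, by ring⟩
    have ht : 0 < t := by linarith
    rw [← sub_nonneg]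
    ring_nf
    positivity
  have hpos : 0 < (y + lam + 2) * (y + 2) := by positivity
  refine le_of_mul_le_mul_right ?_ hpos
  calc (y + 1)^2 * hsq lam (y + 2) * ((y + lam + 2) * (y + 2))
      = hsq lam y * ((y + lam) * (y + 2*lam) * (y + 2*lam + 1) * (y + 1)) := by
        linear_combination (y + 1) * e
    _ ≤ hsq lam y * ((y + 2*lam - 1)^2 * ((y + lam + 2) * (y + 2))) := by gcongr
    _ = _ := by ring

end Scalar

section RowSum

variable {lam y₀ : ℝ}

lemma sum_partialSum_mul_weight_le (hlam : 2 < lam) (hy₀ : 0 < y₀) (k : ℕ) :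
    2 * (lam + 3) * ∑ j ∈ Finset.range (k + 1),
        gegPartialSum lam (y₀ + 2*j) * gegWeight lam (y₀ + 2*j)
      ≤ gegPartialSum lam (y₀ + 2*k) * gegWeight lam (y₀ + 2*k)
        * (y₀ + 2*k + 3*lam + 6) := by
  have hlam0 : 0 < lam := by linarith
  induction k with
  | zero =>
    have := gegPartialSum_pos hlam0 hy₀
    have := gegWeight_pos hlam0 hy₀.le
    simp only [zero_add, Finset.sum_range_one, Nat.cast_zero, mul_zero, add_zero]
    rw [mul_comm]
    gcongr
    linarith
  | succ k ih =>
    rw [Finset.sum_range_succ, mul_add]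
    push_cast
    rw [show y₀ + 2*((k:ℝ) + 1) = y₀ + 2*k + 2 by ring]
    have hy : 0 < y₀ + 2*(k:ℝ) := by positivity
    generalize y₀ + 2*(k:ℝ) = y at ih hy ⊢
    have hS := gegPartialSum_add_two_mul hlam0 hy
    have hb := gegWeight_mul_le hlam hy.le
    have hS' := gegPartialSum_pos hlam0 (show 0 < y + 2 by positivity)
    have hb' := gegWeight_pos hlam0 (show 0 ≤ y + 2 by positivity)
    generalize gegPartialSum lam y = S at *
    generalize gegPartialSum lam (y + 2) = S' at *
    generalize gegWeight lam y = b at *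
    generalize gegWeight lam (y + 2) = b' at *
    have hD : 0 < (y + 2*lam + 1) * (y + 2*lam + 2) := by positivity
    suffices h : S * b * (y + 3*lam + 6) ≤ S' * b' * (y + lam + 2) by linarith
    refine le_of_mul_le_mul_right ?_ hD
    calc S * b * (y + 3*lam + 6) * ((y + 2*lam + 1) * (y + 2*lam + 2))
        = S' * y * (y + 3*lam + 6) * (b * (y + 1)) := by
          linear_combination (-(b * (y + 3*lam + 6))) * hS
      _ ≤ S' * y * (y + 3*lam + 6) * (b' * (y + 2*lam - 1)) := by gcongr
      _ = S' * b' * (y * (y + 3*lam + 6) * (y + 2*lam - 1)) := by ring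
      _ ≤ S' * b' * ((y + lam + 2) * ((y + 2*lam + 1) * (y + 2*lam + 2))) := by
          gcongr S' * b' * ?_
          rw [← sub_nonneg]
          obtain ⟨t, rfl⟩ : ∃ t, lam = t + 2 := ⟨lam - 2, by ring⟩
          have ht : 0 < t := by linarith
          ring_nf
          positivity
      _ = _ := by ring

lemma sum_range_min_eq (S b : ℕ → ℝ) {k m : ℕ} (hk : k < m) :
    ∑ j ∈ Finset.range m, S (min k j) * b j
      = ∑ j ∈ Finset.range (k + 1), S j * b j + S k * ∑ j ∈ Finset.Ico (k + 1) m, b j := by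
  rw [← Finset.sum_range_add_sum_Ico _ (show k + 1 ≤ m by omega), Finset.mul_sum]
  congr 1
  · refine Finset.sum_congr rfl fun j hj => ?_
    rw [min_eq_right (by simp at hj; omega)]
  · refine Finset.sum_congr rfl fun j hj => ?_
    rw [min_eq_left (by simp at hj; omega)]

/-- At a row where the row sum is maximal, the part right of the diagonal is controlled by the
part left of it. -/
lemma row_le_of_succ_row_le (hlam : 2 < lam) {y L U : ℝ} (hy : 0 < y) (hL : 0 ≤ L) (hU : 0 ≤ U)
    (h : gegWeight lam (y + 2) * (L + gegPartialSum lam (y + 2) * U)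
      ≤ gegWeight lam y * (L + gegPartialSum lam y * U)) :
    (lam + 2) * (L + gegPartialSum lam y * U) ≤ (2*lam + 1) * L := by
  have hlam0 : 0 < lam := by linarith
  have hS := gegPartialSum_add_two_mul hlam0 hy
  have hb := gegWeight_mul_le hlam hy.le
  have hb' := gegWeight_pos hlam0 (show 0 ≤ y + 2 by positivity)
  have hS0 := gegPartialSum_pos hlam0 hy
  generalize gegPartialSum lam y = S at *
  generalize gegPartialSum lam (y + 2) = S' at *
  generalize gegWeight lam y = b at *
  generalize gegWeight lam (y + 2) = b' at *
  have hX : 0 ≤ L + S * U := by positivity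
  have h1 : (y + 1) * (L + S' * U) ≤ (y + 2*lam - 1) * (L + S * U) := by
    refine le_of_mul_le_mul_left ?_ hb'
    calc b' * ((y + 1) * (L + S' * U)) = (y + 1) * (b' * (L + S' * U)) := by ring
      _ ≤ (y + 1) * (b * (L + S * U)) := by gcongr
      _ = b * (y + 1) * (L + S * U) := by ring
      _ ≤ b' * (y + 2*lam - 1) * (L + S * U) := by gcongr
      _ = _ := by ring
  have h2 : (2*lam + 1) * (y + lam + 1) * (S * U) ≤ (lam - 1) * y * (L + S * U) := by
    have h3 := mul_le_mul_of_nonneg_left h1 hy.le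
    have h4 : y * ((y + 1) * (L + S' * U))
        = y * (y + 1) * L + S * U * ((y + 2*lam + 1) * (y + 2*lam + 2)) := by
      linear_combination U * hS
    rw [h4] at h3
    linarith
  refine le_of_mul_le_mul_right ?_ (show 0 < y + lam + 1 by positivity)
  have h5 : 0 ≤ (lam + 1) * (lam - 1) * (L + S * U) := by
    have : 0 ≤ lam - 1 := by linarith
    positivity
  linarith

theorem gegRowSum_le (hlam : 2 < lam) (hy₀ : 0 < y₀) (m : ℕ) {k : ℕ} (hk : k < m + 1) :
    4 * (lam + 2) * (lam + 3) * (gegWeight lam (y₀ + 2*k) *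
      ∑ j ∈ Finset.range (m + 1),
        gegPartialSum lam (y₀ + 2*(min k j : ℕ)) * gegWeight lam (y₀ + 2*j))
      ≤ (y₀ + 2*m) * (y₀ + 2*m + lam) * (y₀ + 2*m + 2*lam) * (y₀ + 2*m + 3*lam + 6) := by
  have hlam0 : 0 < lam := by linarith
  set R : ℕ → ℝ := fun k => gegWeight lam (y₀ + 2*k) *
    ∑ j ∈ Finset.range (m + 1),
      gegPartialSum lam (y₀ + 2*(min k j : ℕ)) * gegWeight lam (y₀ + 2*j)
  obtain ⟨p, hp, hmax⟩ := Finset.exists_max_image (Finset.range (m + 1)) R ⟨0, by simp⟩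
  have hpm : p < m + 1 := Finset.mem_range.1 hp
  have hRk : R k ≤ R p := hmax k (Finset.mem_range.2 hk)
  have hRq : ∀ q < m + 1, R q = gegWeight lam (y₀ + 2*q) *
      (∑ j ∈ Finset.range (q + 1), gegPartialSum lam (y₀ + 2*j) * gegWeight lam (y₀ + 2*j)
      + gegPartialSum lam (y₀ + 2*q) *
        ∑ j ∈ Finset.Ico (q + 1) (m + 1), gegWeight lam (y₀ + 2*j)) := fun q hq => by
    rw [← sum_range_min_eq (fun j => gegPartialSum lam (y₀ + 2*j))
      (fun j => gegWeight lam (y₀ + 2*j)) hq]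
  have hw : ∀ j : ℕ, 0 < gegWeight lam (y₀ + 2*j) := fun j =>
    gegWeight_pos hlam0 (by positivity)
  have hs : ∀ j : ℕ, 0 < gegPartialSum lam (y₀ + 2*j) := fun j =>
    gegPartialSum_pos hlam0 (by positivity)
  have hL0 : 0 ≤ ∑ j ∈ Finset.range (p + 1),
      gegPartialSum lam (y₀ + 2*j) * gegWeight lam (y₀ + 2*j) :=
    Finset.sum_nonneg fun j _ => (mul_pos (hs j) (hw j)).le
  have hbound : (lam + 2) * R p ≤ (2*lam + 1) * (gegWeight lam (y₀ + 2*p) *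
      ∑ j ∈ Finset.range (p + 1),
        gegPartialSum lam (y₀ + 2*j) * gegWeight lam (y₀ + 2*j)) := by
    rw [hRq p hpm, mul_left_comm, mul_left_comm (2*lam + 1)]
    refine mul_le_mul_of_nonneg_left ?_ (hw p).le
    rcases (Nat.lt_succ_iff.1 hpm).eq_or_lt with rfl | hlt
    · rw [Finset.Ico_self, Finset.sum_empty, mul_zero, add_zero]
      exact mul_le_mul_of_nonneg_right (by linarith) hL0
    · refine row_le_of_succ_row_le hlam (by positivity) hL0
        (Finset.sum_nonneg fun j _ => (hw j).le) ?_
      have hsucc := hmax (p + 1) (Finset.mem_range.2 (by omega))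
      rw [hRq p hpm, hRq (p + 1) (by omega), Finset.sum_range_succ] at hsucc
      rw [Finset.sum_eq_sum_Ico_succ_bot (show p + 1 < m + 1 by omega)] at hsucc ⊢
      push_cast at hsucc ⊢
      rw [show y₀ + 2*((p:ℝ) + 1) = y₀ + 2*p + 2 by ring] at hsucc ⊢
      linarith
  have hLle := sum_partialSum_mul_weight_le hlam hy₀ p
  have hdiag := gegPartialSum_mul_gegWeight_sq hlam0 (show 0 < y₀ + 2*(p:ℝ) by positivity)
  have hpc : (p : ℝ) ≤ m := by exact_mod_cast Nat.lt_succ_iff.1 hpm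
  have hwp := hw p
  calc 4 * (lam + 2) * (lam + 3) * R k
      ≤ 4 * (lam + 2) * (lam + 3) * R p := by gcongr
    _ = 4 * (lam + 3) * ((lam + 2) * R p) := by ring
    _ ≤ 4 * (lam + 3) * ((2*lam + 1) * (gegWeight lam (y₀ + 2*p) *
          ∑ j ∈ Finset.range (p + 1),
            gegPartialSum lam (y₀ + 2*j) * gegWeight lam (y₀ + 2*j))) := by gcongr
    _ = 2 * (2*lam + 1) * gegWeight lam (y₀ + 2*p) * (2 * (lam + 3) *
          ∑ j ∈ Finset.range (p + 1),
            gegPartialSum lam (y₀ + 2*j) * gegWeight lam (y₀ + 2*j)) := by ring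
    _ ≤ 2 * (2*lam + 1) * gegWeight lam (y₀ + 2*p) *
          (gegPartialSum lam (y₀ + 2*p) * gegWeight lam (y₀ + 2*p)
            * (y₀ + 2*p + 3*lam + 6)) := by gcongr
    _ = (y₀ + 2*p) * (y₀ + 2*p + lam) * (y₀ + 2*p + 2*lam) * (y₀ + 2*p + 3*lam + 6) := by
        linear_combination (y₀ + 2*p + 3*lam + 6) * hdiag
    _ ≤ _ := by gcongr

end RowSum

section Matrices

variable {lam : ℝ}

lemma sum_gegAlpha_sq (hlam : 0 < lam) (k : ℕ) :
    ∑ i ∈ Finset.Icc 1 (k + 1), gegAlpha lam i ^ 2 = gegPartialSum lam (2 + 2*k) := by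
  have hsq_eq : ∀ k : ℕ, gegAlpha lam (k + 1) ^ 2
      = (2*(k:ℝ) + 1 + lam)^2 * hsq lam (2*k + 1) := fun k => by
    rw [gegAlpha, mul_pow]
    push_cast
    rw [show 2*((k:ℝ) + 1) - 1 = 2*k + 1 by ring, Real.sq_sqrt (hsq_pos_s15 hlam (by positivity)).le]
  induction k with
  | zero =>
    have h := hsq_eq 0
    have e := hsq_mul_eq hlam zero_le_one
    have e' := gegPartialSum_mul_eq hlam zero_lt_two
    rw [show (2:ℝ) + 1 + 2*lam = (1 + 2*lam) + 1 + 1 by ring, Real.Gamma_add_one (by positivity),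
      Real.Gamma_add_one (by positivity), ← e, one_add_one_eq_two, Real.Gamma_two] at e'
    simp only [zero_add, Nat.cast_zero, mul_zero, add_zero] at h ⊢
    rw [Finset.Icc_self, Finset.sum_singleton, h]
    apply mul_right_cancel₀ (show 2 * (2*lam + 1) ≠ 0 by positivity)
    linear_combination -e'
  | succ k ih =>
    rw [Finset.sum_Icc_succ_top (by omega), ih, hsq_eq (k + 1)]
    push_cast
    rw [show 2 + 2*((k:ℝ) + 1) = 2 + 2*k + 2 by ring, gegPartialSum_add_two hlam (by positivity)]
    ring_nf

lemma sum_gegAlphaTildeSq (hlam : 0 < lam) (k : ℕ) :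
    ∑ i ∈ Finset.Icc 1 (k + 1), gegAlphaTildeSq lam i = gegPartialSum lam (1 + 2*k) := by
  induction k with
  | zero =>
    have e' := gegPartialSum_mul_eq hlam zero_lt_one
    rw [show (1:ℝ) + 1 + 2*lam = (2*lam + 1) + 1 by ring, Real.Gamma_add_one (by positivity),
      Real.Gamma_one] at e'
    simp only [zero_add, Nat.cast_zero, mul_zero, add_zero]
    rw [Finset.Icc_self, Finset.sum_singleton, gegAlphaTildeSq, if_pos rfl]
    apply mul_right_cancel₀ (show 2 * (2*lam + 1) ≠ 0 by positivity)
    linear_combination -e'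
  | succ k ih =>
    rw [Finset.sum_Icc_succ_top (by omega), ih, gegAlphaTildeSq, if_neg (by omega)]
    push_cast
    rw [show 1 + 2*((k:ℝ) + 1) = 1 + 2*k + 2 by ring, gegPartialSum_add_two hlam (by positivity)]
    ring_nf

lemma Amat_apply (hlam : 0 < lam) (m : ℕ) (k j : Fin m) :
    Amat lam m k j = gegPartialSum lam (2 + 2*(min (k:ℕ) (j:ℕ) : ℕ)) *
      gegWeight lam (2 + 2*(k:ℕ)) * gegWeight lam (2 + 2*(j:ℕ)) := by
  have hb : ∀ i : ℕ, gegBeta lam (i + 1) = gegWeight lam (2 + 2*i) := fun i => by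
    rw [gegBeta, gegWeight]
    push_cast
    rw [show 2*((i:ℝ) + 1) = 2 + 2*i by ring]
  rw [Amat, hb, hb, Nat.add_min_add_right, sum_gegAlpha_sq hlam]

lemma AmatTilde_apply (hlam : 0 < lam) (m : ℕ) (k j : Fin m) :
    AmatTilde lam m k j = gegPartialSum lam (1 + 2*(min (k:ℕ) (j:ℕ) : ℕ)) *
      gegWeight lam (1 + 2*(k:ℕ)) * gegWeight lam (1 + 2*(j:ℕ)) := by
  have hb : ∀ i : ℕ, gegBetaTilde lam (i + 1) = gegWeight lam (1 + 2*i) := fun i => by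
    rw [gegBetaTilde, gegWeight]
    push_cast
    rw [show 2*((i:ℝ) + 1) - 1 = 1 + 2*i by ring]
  rw [AmatTilde, hb, hb, Nat.add_min_add_right, sum_gegAlphaTildeSq hlam]

lemma rowSumNorm_four_smul_le (hlam : 2 < lam) {y₀ N : ℝ} (hy₀ : 0 < y₀) {M m : ℕ}
    (hM : M = m + 1) (hN : N = y₀ + 2*m) (A : Matrix (Fin M) (Fin M) ℝ)
    (hA : ∀ k j, A k j = gegPartialSum lam (y₀ + 2*(min (k:ℕ) (j:ℕ) : ℕ)) *
      gegWeight lam (y₀ + 2*(k:ℕ)) * gegWeight lam (y₀ + 2*(j:ℕ))) :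
    rowSumNorm ((4:ℝ) • A) ≤ 1/((lam + 2) * (lam + 3)) *
        (N * (N + lam) * (N + 2*lam) * (N + 3*lam + 6)) := by
  subst hM hN
  have hlam0 : 0 < lam := by linarith
  refine ciSup_le fun k => ?_
  rw [one_div_mul_eq_div, le_div_iff₀ (by positivity)]
  refine le_of_eq_of_le ?_ (gegRowSum_le hlam hy₀ m k.isLt)
  rw [Finset.sum_range, Finset.mul_sum, Finset.mul_sum, Finset.sum_mul]
  refine Finset.sum_congr rfl fun j _ => ?_
  have hs := gegPartialSum_pos hlam0 (show 0 < y₀ + 2*((min (k:ℕ) (j:ℕ) : ℕ) : ℝ) by positivity)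
  have hk := gegWeight_pos hlam0 (show 0 ≤ y₀ + 2*((k:ℕ):ℝ) by positivity)
  have hj := gegWeight_pos hlam0 (show 0 ≤ y₀ + 2*((j:ℕ):ℝ) by positivity)
  rw [Matrix.smul_apply, hA, smul_eq_mul, abs_of_pos (by positivity)]
  ring

end Matrices

theorem Bmat_rowSumNorm_bound (lam : ℝ) (hlam : 2 < lam) (n : ℕ) (hn : 1 ≤ n) :
    rowSumNorm (Bmat lam n) ≤
      1/((lam + 2) * (lam + 3)) *
        ((n : ℝ) * ((n : ℝ) + lam) * ((n : ℝ) + 2*lam) * ((n : ℝ) + 3*lam + 6)) ∧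
    1/((lam + 2) * (lam + 3)) *
        ((n : ℝ) * ((n : ℝ) + lam) * ((n : ℝ) + 2*lam) * ((n : ℝ) + 3*lam + 6)) ≤
      1/((lam + 2) * (lam + 3)) * ((n : ℝ) * ((n : ℝ) + 2*lam + 2)^3) := by
  have hlam0 : 0 < lam := by linarith
  constructor
  · unfold Bmat
    split_ifs with h
    · obtain ⟨m, rfl⟩ : ∃ m, n = 2 + 2*m := ⟨n/2 - 1, by omega⟩
      exact rowSumNorm_four_smul_le hlam zero_lt_two (m := m) (by omega) (by push_cast; rfl) _
        (Amat_apply hlam0 _)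
    · obtain ⟨m, rfl⟩ : ∃ m, n = 1 + 2*m := ⟨n/2, by omega⟩
      exact rowSumNorm_four_smul_le hlam zero_lt_one (m := m) (by omega) (by push_cast; rfl) _
        (AmatTilde_apply hlam0 _)
  · have hn0 : (0:ℝ) ≤ n := Nat.cast_nonneg n
    rw [mul_assoc (n : ℝ), mul_assoc (n : ℝ)]
    gcongr
    -- with `u = n + 2λ + 2` the factors are `u - (λ+2)`, `u - 2` and `u + (λ+4)`
    have hu : 0 ≤ ((n : ℝ) + 2*lam + 2) * ((lam + 4)^2 - 2*(lam + 2)) := by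
      have : 0 ≤ (lam + 4)^2 - 2*(lam + 2) := by nlinarith
      positivity
    nlinarith [mul_pos hlam0 hlam0]
end
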